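/- arXiv:0902.4424 — 2 statements merged into one kernel-verified Lean document; each statement's English description precedes it below -/
import Mathlib

section
/- Let K be a real n×p matrix, y ∈ ℝⁿ, and ρ ≥ 0. If x̃ is a minimizer of ‖Kx − y‖² over the ℓ₁-ball {x ∈ ℝᵖ : ‖x‖₁ ≤ ρ}, then x̃ is a minimizer over all of ℝᵖ of the penalized functional F_λ(x) = ‖Kx − y‖² + 2λ‖x‖₁ with λ = max_i |(Kᵀ(y − Kx̃))_i| = ‖Kᵀ(y − Kx̃)‖_∞. -/
open Finset

theorem lasso_expand (n p : ℕ)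
    (K : Matrix (Fin n) (Fin p) ℝ) (y : Fin n → ℝ) (xt d : Fin p → ℝ) (t : ℝ) :
    ∑ j, (K.mulVec (xt + t • d) j - y j) ^ 2 = ∑ j, (K.mulVec xt j - y j) ^ 2
      - 2 * t * ∑ i, K.transpose.mulVec (y - K.mulVec xt) i * d i
      + t ^ 2 * ∑ j, (K.mulVec d j) ^ 2 := by
  have h : ∑ i, K.transpose.mulVec (y - K.mulVec xt) i * d i
      = ∑ j, (y j - K.mulVec xt j) * K.mulVec d j := by
    have := Matrix.dotProduct_mulVec (y - K.mulVec xt) K d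
    rw [← Matrix.mulVec_transpose] at this
    simpa [dotProduct] using this.symm
  rw [h, Finset.mul_sum, Finset.mul_sum, ← Finset.sum_sub_distrib, ← Finset.sum_add_distrib]
  refine Finset.sum_congr rfl fun j _ => ?_
  rw [Matrix.mulVec_add, Matrix.mulVec_smul]
  simp only [Pi.add_apply, Pi.smul_apply, smul_eq_mul]
  ring

/-- If `x̃` minimizes `‖Kx − y‖²` over the ℓ₁-ball of radius `ρ`,
then `x̃` minimizes the penalized functional `F_λ(x) = ‖Kx − y‖² + 2λ‖x‖₁`
over all of `ℝᵖ`, with `λ = max_i |(Kᵀ(y − Kx̃))_i|`. -/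
theorem constrained_minimizer_is_lasso_minimizer (n p : ℕ)
    (K : Matrix (Fin n) (Fin p) ℝ) (y : Fin n → ℝ) (ρ : ℝ) (hρ : 0 ≤ ρ)
    (xt : Fin p → ℝ) (hxt : (∑ i, |xt i|) ≤ ρ)
    (hmin : ∀ x : Fin p → ℝ, (∑ i, |x i|) ≤ ρ →
        (∑ j, (K.mulVec xt j - y j) ^ 2) ≤ ∑ j, (K.mulVec x j - y j) ^ 2) :
    ∀ x : Fin p → ℝ,
      (∑ j, (K.mulVec xt j - y j) ^ 2)
          + 2 * (⨆ i : Fin p, |K.transpose.mulVec (y - K.mulVec xt) i|) * ∑ i, |xt i|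
        ≤ (∑ j, (K.mulVec x j - y j) ^ 2)
          + 2 * (⨆ i : Fin p, |K.transpose.mulVec (y - K.mulVec xt) i|) * ∑ i, |x i| := by
  intro x
  rcases Nat.eq_zero_or_pos p with hp | hp
  · subst hp
    rw [Subsingleton.elim x xt]
  haveI : Nonempty (Fin p) := ⟨⟨0, hp⟩⟩
  have hexp := lasso_expand n p K y xt
  set g := K.transpose.mulVec (y - K.mulVec xt) with hg
  obtain ⟨i0, hi0⟩ := exists_eq_ciSup_of_finite (f := fun i : Fin p => |g i|)
  have hle : ∀ i, |g i| ≤ ⨆ i : Fin p, |g i| :=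
    fun i => le_ciSup (f := fun i : Fin p => |g i|) (Set.finite_range _).bddAbove i
  set L := ⨆ i : Fin p, |g i| with hL
  have hi0' : |g i0| = L := hi0
  have hL0 : 0 ≤ L := hi0' ▸ abs_nonneg _
  have hhold : ∑ i, g i * x i ≤ L * ∑ i, |x i| := by
    rw [Finset.mul_sum]
    refine Finset.sum_le_sum fun i _ => ?_
    calc g i * x i ≤ |g i * x i| := le_abs_self _
      _ = |g i| * |x i| := abs_mul _ _
      _ ≤ L * |x i| := mul_le_mul_of_nonneg_right (hle i) (abs_nonneg _)
  -- first-order condition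
  have hfo : ∀ z : Fin p → ℝ, (∑ i, |z i|) ≤ ρ → ∑ i, g i * (z - xt) i ≤ 0 := by
    intro z hz
    by_contra! hpos
    set c := ∑ i, g i * (z - xt) i with hc
    set Q := ∑ j, (K.mulVec (z - xt) j) ^ 2 with hQ
    have hQ0 : 0 ≤ Q := Finset.sum_nonneg fun j _ => sq_nonneg _
    have key : ∀ t : ℝ, 0 < t → t ≤ 1 → 2 * c ≤ t * Q := by
      intro t ht ht1
      have hb : ∑ i, |(xt + t • (z - xt)) i| ≤ ρ := by
        calc ∑ i, |(xt + t • (z - xt)) i| ≤ ∑ i, ((1 - t) * |xt i| + t * |z i|) := by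
              refine Finset.sum_le_sum fun i _ => ?_
              have : (xt + t • (z - xt)) i = (1 - t) * xt i + t * z i := by
                simp only [Pi.add_apply, Pi.smul_apply, Pi.sub_apply, smul_eq_mul]; ring
              rw [this]
              refine (abs_add_le _ _).trans ?_
              rw [abs_mul, abs_mul, abs_of_pos ht, abs_of_nonneg (sub_nonneg.2 ht1)]
          _ = (1 - t) * ∑ i, |xt i| + t * ∑ i, |z i| := by
              rw [Finset.sum_add_distrib, Finset.mul_sum, Finset.mul_sum]
          _ ≤ (1 - t) * ρ + t * ρ := by
              have := sub_nonneg.2 ht1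
              gcongr
          _ = ρ := by ring
      have h1 := hmin _ hb
      rw [hexp (z - xt) t] at h1
      have h2 : t * (2 * c) ≤ t * (t * Q) := by nlinarith
      exact le_of_mul_le_mul_left h2 ht
    have hd : 0 < c + Q := by linarith
    have h3 := key (c / (c + Q)) (div_pos hpos hd) ((div_le_one hd).2 (by linarith))
    have h4 : c / (c + Q) * Q ≤ c := by
      rw [div_mul_eq_mul_div, div_le_iff₀ hd]; nlinarith
    linarith
  have hsg : ∃ s : ℝ, |s| ≤ 1 ∧ g i0 * s = L := by
    rcases le_total 0 (g i0) with h | h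
    · exact ⟨1, by simp, by rw [← hi0', abs_of_nonneg h, mul_one]⟩
    · exact ⟨-1, by simp, by rw [← hi0', abs_of_nonpos h]; ring⟩
  obtain ⟨s, hs1, hs⟩ := hsg
  have h5 := hfo (Pi.single i0 (ρ * s)) (by
    rw [Finset.sum_eq_single i0]
    · rw [Pi.single_eq_same, abs_mul, abs_of_nonneg hρ]
      nlinarith
    · intro b _ hb
      simp [Pi.single_eq_of_ne hb]
    · simp)
  have h6 : ∑ i, g i * (Pi.single i0 (ρ * s) - xt : Fin p → ℝ) i = ρ * L - ∑ i, g i * xt i := by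
    simp only [Pi.sub_apply, mul_sub, Finset.sum_sub_distrib]
    congr 1
    rw [Finset.sum_eq_single i0]
    · rw [Pi.single_eq_same, ← hs]; ring
    · intro b _ hb
      simp [Pi.single_eq_of_ne hb]
    · simp
  have h7 : L * ∑ i, |xt i| ≤ L * ρ := mul_le_mul_of_nonneg_left hxt hL0
  have h8 := hexp (x - xt) 1
  have h9 : ∑ i, g i * (x - xt) i = ∑ i, g i * x i - ∑ i, g i * xt i := by
    simp only [Pi.sub_apply, mul_sub, Finset.sum_sub_distrib]
  have h10 : 0 ≤ ∑ j, (K.mulVec (x - xt) j) ^ 2 := Finset.sum_nonneg fun j _ => sq_nonneg _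
  rw [one_smul, add_sub_cancel, h9] at h8
  rw [h6] at h5
  rw [h8]
  linarith
end

section
/- Let K be a real n×p matrix with operator norm ‖K‖ < √2, y ∈ ℝⁿ, and λ > 0. For any initial vector x⁽⁰⁾ ∈ ℝᵖ, the iterative soft-thresholding sequence x⁽ᵏ⁺¹⁾ = S_λ[x⁽ᵏ⁾ + Kᵀ(y − Kx⁽ᵏ⁾)] converges to a minimizer of the functional F_λ(x) = ‖Kx − y‖² + 2λ‖x‖₁ over ℝᵖ. -/
open Finset Filter

/-- The soft-thresholding operator `S_λ`, acting componentwise: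
`(S_λ[b])_i = b_i − λ·sgn(b_i)` if `|b_i| > λ`, and `0` otherwise. -/
noncomputable def softThreshold (p : ℕ) (lam : ℝ) (b : Fin p → ℝ) : Fin p → ℝ :=
  fun i => if lam < |b i| then b i - lam * Real.sign (b i) else 0

lemma soft_scalar (lam : ℝ) (hlam : 0 < lam) (t : ℝ) :
    (if lam < |t| then t - lam * Real.sign t else 0) = max (t - lam) 0 - max (-t - lam) 0 := by
  rcases lt_trichotomy t 0 with h | h | h
  · rw [Real.sign_of_neg h, abs_of_neg h, max_eq_right (by linarith : t - lam ≤ 0)]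
    split_ifs with h1
    · rw [max_eq_left (by linarith)]; ring
    · rw [max_eq_right (by linarith)]; ring
  · subst h
    rw [max_eq_right (by linarith), max_eq_right (by linarith)]
    simp
  · rw [Real.sign_of_pos h, abs_of_pos h, max_eq_right (by linarith : -t - lam ≤ 0)]
    split_ifs with h1
    · rw [max_eq_left (by linarith)]; ring
    · rw [max_eq_right (by linarith)]; ring

lemma soft_apply (p : ℕ) (lam : ℝ) (hlam : 0 < lam) (b : Fin p → ℝ) (i : Fin p) :
    softThreshold p lam b i = max (b i - lam) 0 - max (-(b i) - lam) 0 :=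
  soft_scalar lam hlam (b i)

lemma soft_cont (p : ℕ) (lam : ℝ) (hlam : 0 < lam) : Continuous (softThreshold p lam) := by
  have : softThreshold p lam = fun b i => max (b i - lam) 0 - max (-(b i) - lam) 0 := by
    funext b i; exact soft_apply p lam hlam b i
  rw [this]
  fun_prop

lemma soft_scalar_var (lam : ℝ) (hlam : 0 < lam) (t w : ℝ) :
    (t - (max (t - lam) 0 - max (-t - lam) 0)) * (w - (max (t - lam) 0 - max (-t - lam) 0))
      ≤ lam * (|w| - |max (t - lam) 0 - max (-t - lam) 0|) := by
  have h1 := le_abs_self w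
  have h2 := neg_abs_le w
  rcases le_total lam t with h | h
  · rw [max_eq_left (by linarith), max_eq_right (by linarith), sub_zero,
      abs_of_nonneg (by linarith : 0 ≤ t - lam)]
    nlinarith
  · rcases le_total t (-lam) with h' | h'
    · rw [max_eq_right (by linarith), max_eq_left (by linarith), zero_sub, abs_neg,
        abs_of_nonneg (by linarith : 0 ≤ -t - lam)]
      nlinarith
    · rw [max_eq_right (by linarith), max_eq_right (by linarith)]
      simp only [sub_zero, abs_zero]
      have := abs_mul t w
      have h3 : |t| ≤ lam := abs_le.2 ⟨h', h⟩
      nlinarith [le_abs_self (t * w), abs_nonneg w]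

lemma soft_var (p : ℕ) (lam : ℝ) (hlam : 0 < lam) (b w : Fin p → ℝ) :
    (b - softThreshold p lam b) ⬝ᵥ (w - softThreshold p lam b)
      ≤ lam * (∑ i, |w i| - ∑ i, |softThreshold p lam b i|) := by
  rw [← Finset.sum_sub_distrib, Finset.mul_sum]
  apply Finset.sum_le_sum
  intro i _
  simp only [Pi.sub_apply, soft_apply p lam hlam]
  exact soft_scalar_var lam hlam _ _

/-- firm inequality via the variational one -/
lemma soft_nonexp (p : ℕ) (lam : ℝ) (hlam : 0 < lam) (a b : Fin p → ℝ) :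
    (softThreshold p lam a - softThreshold p lam b) ⬝ᵥ
      (softThreshold p lam a - softThreshold p lam b) ≤ (a - b) ⬝ᵥ (a - b) := by
  have h1 := soft_var p lam hlam a (softThreshold p lam b)
  have h2 := soft_var p lam hlam b (softThreshold p lam a)
  set u := softThreshold p lam a
  set v := softThreshold p lam b
  have h3 : 0 ≤ ((a - b) - (u - v)) ⬝ᵥ ((a - b) - (u - v)) :=
    Finset.sum_nonneg fun i _ => mul_self_nonneg _
  have h4 : (a - b) ⬝ᵥ (a - b) - (u - v) ⬝ᵥ (u - v) =
      ((a - b) - (u - v)) ⬝ᵥ ((a - b) - (u - v)) -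
        2 * ((a - u) ⬝ᵥ (v - u) + (b - v) ⬝ᵥ (u - v)) := by
    simp only [dotProduct, Finset.mul_sum, ← Finset.sum_add_distrib, ← Finset.sum_sub_distrib]
    apply Finset.sum_congr rfl
    intro i _
    simp only [Pi.sub_apply]
    ring
  linarith

lemma op_bound (n p : ℕ) (K : Matrix (Fin n) (Fin p) ℝ)
    (hK : ‖LinearMap.toContinuousLinearMap (Matrix.toEuclideanLin K)‖ < Real.sqrt 2) :
    ∃ c : ℝ, 0 < c ∧ ∀ v : Fin p → ℝ, K.mulVec v ⬝ᵥ K.mulVec v ≤ (2 - c) * (v ⬝ᵥ v) := by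
  set L := LinearMap.toContinuousLinearMap (Matrix.toEuclideanLin K)
  have hL : ‖L‖ ^ 2 < 2 := by
    have := Real.sq_sqrt (show (0:ℝ) ≤ 2 by norm_num)
    nlinarith [norm_nonneg L]
  refine ⟨2 - ‖L‖ ^ 2, by linarith, fun v => ?_⟩
  have h := L.le_opNorm (WithLp.toLp 2 v)
  have h2 : ‖L (WithLp.toLp 2 v)‖ ^ 2 ≤ ‖L‖ ^ 2 * ‖WithLp.toLp 2 v‖ ^ 2 := by
    rw [← mul_pow]
    exact pow_le_pow_left₀ (norm_nonneg _) h 2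
  rw [EuclideanSpace.real_norm_sq_eq, EuclideanSpace.real_norm_sq_eq] at h2
  have e : 2 - (2 - ‖L‖ ^ 2) = ‖L‖ ^ 2 := by ring
  rw [e]
  simp only [dotProduct, ← sq]
  exact h2

lemma grad_nonexp (n p : ℕ) (K : Matrix (Fin n) (Fin p) ℝ)
    (h : ∀ v : Fin p → ℝ, K.mulVec v ⬝ᵥ K.mulVec v ≤ 2 * (v ⬝ᵥ v)) (v : Fin p → ℝ) :
    (v - K.transpose.mulVec (K.mulVec v)) ⬝ᵥ (v - K.transpose.mulVec (K.mulVec v)) ≤ v ⬝ᵥ v := by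
  set w := K.mulVec v with hw
  set u := K.transpose.mulVec w with hu
  have h1 : ∀ z, u ⬝ᵥ z = w ⬝ᵥ K.mulVec z := by
    intro z
    rw [hu, Matrix.mulVec_transpose, Matrix.dotProduct_mulVec]
  have h2 : 0 ≤ (K.mulVec u - (2:ℝ) • w) ⬝ᵥ (K.mulVec u - (2:ℝ) • w) :=
    Finset.sum_nonneg fun i _ => mul_self_nonneg _
  have h3 := h u
  have h4 := h1 u
  have h5 := h1 v
  rw [← hw] at h5
  simp only [sub_dotProduct, dotProduct_sub, smul_dotProduct, dotProduct_smul, smul_eq_mul] at h2 ⊢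
  rw [dotProduct_comm (K.mulVec u) w] at h2
  rw [dotProduct_comm v u]
  linarith

/-- if `‖K‖ < √2` (operator norm), then for any initial vector,
the iterative soft-thresholding sequence
`x⁽ᵏ⁺¹⁾ = S_λ[x⁽ᵏ⁾ + Kᵀ(y − Kx⁽ᵏ⁾)]` converges to a minimizer of
`F_λ(x) = ‖Kx − y‖² + 2λ‖x‖₁`. -/
theorem ista_converges_to_lasso_minimizer (n p : ℕ) (K : Matrix (Fin n) (Fin p) ℝ)
    (y : Fin n → ℝ) (lam : ℝ) (hlam : 0 < lam)
    (hK : ‖LinearMap.toContinuousLinearMap (Matrix.toEuclideanLin K)‖ < Real.sqrt 2)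
    (xseq : ℕ → (Fin p → ℝ))
    (hrec : ∀ k : ℕ,
        xseq (k + 1) =
          softThreshold p lam (xseq k + K.transpose.mulVec (y - K.mulVec (xseq k)))) :
    ∃ xstar : Fin p → ℝ,
      (∀ x : Fin p → ℝ,
          (∑ j, (K.mulVec xstar j - y j) ^ 2) + 2 * lam * ∑ i, |xstar i|
            ≤ (∑ j, (K.mulVec x j - y j) ^ 2) + 2 * lam * ∑ i, |x i|) ∧
      Tendsto xseq atTop (nhds xstar) := by
  obtain ⟨c, hc, hb⟩ := op_bound n p K hK
  have hnn : ∀ (m : ℕ) (v : Fin m → ℝ), 0 ≤ v ⬝ᵥ v := fun m v =>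
    Finset.sum_nonneg fun i _ => mul_self_nonneg _
  have hb2 : ∀ v : Fin p → ℝ, K.mulVec v ⬝ᵥ K.mulVec v ≤ 2 * (v ⬝ᵥ v) := fun v => by
    nlinarith [hb v, hnn p v]
  set G : (Fin p → ℝ) → (Fin p → ℝ) := fun x => x + K.transpose.mulVec (y - K.mulVec x) with hG
  set F : (Fin p → ℝ) → ℝ := fun x =>
    (∑ j, (K.mulVec x j - y j) ^ 2) + 2 * lam * ∑ i, |x i| with hF
  have hadj : ∀ (w : Fin n → ℝ) (z : Fin p → ℝ),
      K.transpose.mulVec w ⬝ᵥ z = w ⬝ᵥ K.mulVec z := by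
    intro w z
    rw [Matrix.mulVec_transpose, Matrix.dotProduct_mulVec]
  have hrec' : ∀ k, xseq (k + 1) = softThreshold p lam (G (xseq k)) := hrec
  have hFdot : ∀ x, F x = (K.mulVec x - y) ⬝ᵥ (K.mulVec x - y) + 2 * lam * ∑ i, |x i| := by
    intro x
    simp only [hF, dotProduct, sq, Pi.sub_apply]
  -- quadratic identity
  have hquad : ∀ a b : Fin p → ℝ, (K.mulVec a - y) ⬝ᵥ (K.mulVec a - y)
      - (K.mulVec b - y) ⬝ᵥ (K.mulVec b - y) =
      2 * ((K.mulVec b - y) ⬝ᵥ K.mulVec (a - b)) + K.mulVec (a - b) ⬝ᵥ K.mulVec (a - b) := by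
    intro a b
    rw [Matrix.mulVec_sub]
    simp only [dotProduct, Finset.mul_sum, ← Finset.sum_add_distrib, ← Finset.sum_sub_distrib]
    apply Finset.sum_congr rfl
    intro i _
    simp only [Pi.sub_apply]
    ring
  -- descent
  have hdesc : ∀ x : Fin p → ℝ, c * ((softThreshold p lam (G x) - x) ⬝ᵥ
      (softThreshold p lam (G x) - x)) ≤ F x - F (softThreshold p lam (G x)) := by
    intro x
    have h1 := soft_var p lam hlam (G x) x
    set u := softThreshold p lam (G x)
    have h2 := hquad u x
    have h3 := hb (u - x)
    have h4 : (G x - u) ⬝ᵥ (x - u) = (u - x) ⬝ᵥ (u - x)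
        + (K.mulVec x - y) ⬝ᵥ K.mulVec (u - x) := by
      have e1 : G x - u = -(u - x) - K.transpose.mulVec (K.mulVec x - y) := by
        simp only [hG, Matrix.mulVec_sub]
        abel
      rw [e1, ← neg_sub u x, ← hadj]
      simp only [sub_dotProduct, neg_dotProduct, dotProduct_neg]
      ring
    rw [hFdot, hFdot]
    linarith
  -- fixed points are minimizers
  have hmin : ∀ z : Fin p → ℝ, softThreshold p lam (G z) = z → ∀ x, F z ≤ F x := by
    intro z hz x
    have h1 := soft_var p lam hlam (G z) x
    rw [hz] at h1
    have e1 : G z - z = - K.transpose.mulVec (K.mulVec z - y) := by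
      simp only [hG, Matrix.mulVec_sub]
      abel
    rw [e1, neg_dotProduct, hadj] at h1
    have h2 := hquad x z
    have h3 := hnn n (K.mulVec (x - z))
    rw [hFdot, hFdot]
    linarith
  -- nonexpansive
  have hne : ∀ a b : Fin p → ℝ, (softThreshold p lam (G a) - softThreshold p lam (G b)) ⬝ᵥ
      (softThreshold p lam (G a) - softThreshold p lam (G b)) ≤ (a - b) ⬝ᵥ (a - b) := by
    intro a b
    refine (soft_nonexp p lam hlam (G a) (G b)).trans ?_
    have e : G a - G b = (a - b) - K.transpose.mulVec (K.mulVec (a - b)) := by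
      simp only [hG, Matrix.mulVec_sub]
      abel
    rw [e]
    exact grad_nonexp n p K hb2 _
  have hTc : Continuous fun x => softThreshold p lam (G x) := by
    refine (soft_cont p lam hlam).comp ?_
    simp only [hG]
    fun_prop
  have hF0 : ∀ x, 0 ≤ F x := by
    intro x
    rw [hFdot]
    have := hnn n (K.mulVec x - y)
    positivity
  have hFanti : Antitone fun k => F (xseq k) := by
    apply antitone_nat_of_succ_le
    intro k
    have := hdesc (xseq k)
    rw [← hrec'] at this
    nlinarith [hnn p (xseq (k + 1) - xseq k)]
  have hFlim := tendsto_atTop_ciInf hFanti ⟨0, by rintro _ ⟨k, rfl⟩; exact hF0 _⟩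
  have hdiff : Tendsto (fun k => F (xseq k) - F (xseq (k + 1))) atTop (nhds 0) := by
    have := hFlim.sub (hFlim.comp (tendsto_add_atTop_nat 1))
    simpa using this
  -- from squared distance to convergence
  have hconv : ∀ v : ℕ → (Fin p → ℝ), Tendsto (fun k => v k ⬝ᵥ v k) atTop (nhds 0) →
      Tendsto v atTop (nhds 0) := by
    intro v hv
    rw [tendsto_pi_nhds]
    intro i
    have h1 : Tendsto (fun k => v k i ^ 2) atTop (nhds 0) := by
      refine squeeze_zero (fun k => sq_nonneg _) (fun k => ?_) hv
      rw [sq]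
      exact Finset.single_le_sum (f := fun i => v k i * v k i)
        (fun j _ => mul_self_nonneg _) (Finset.mem_univ i)
    have h2 := h1.sqrt
    simp only [Real.sqrt_sq_eq_abs, Real.sqrt_zero] at h2
    exact (tendsto_zero_iff_abs_tendsto_zero _).2 h2
  have hstep : Tendsto (fun k => xseq (k + 1) - xseq k) atTop (nhds 0) := by
    apply hconv
    have h1 : Tendsto (fun k => (F (xseq k) - F (xseq (k + 1))) / c) atTop (nhds 0) := by
      simpa using hdiff.div_const c
    refine squeeze_zero (fun k => hnn p _) (fun k => ?_) h1
    rw [le_div_iff₀ hc, mul_comm]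
    have := hdesc (xseq k)
    rwa [← hrec'] at this
  have hbd : ∀ k, xseq k ∈ Metric.closedBall (0 : Fin p → ℝ) (F (xseq 0) / (2 * lam)) := by
    intro k
    rw [mem_closedBall_zero_iff, pi_norm_le_iff_of_nonneg (div_nonneg (hF0 _) (by positivity))]
    intro i
    rw [le_div_iff₀ (by positivity), Real.norm_eq_abs]
    have h1 : F (xseq k) ≤ F (xseq 0) := hFanti (Nat.zero_le k)
    rw [hFdot (xseq k)] at h1
    have h2 := hnn n (K.mulVec (xseq k) - y)
    have h3 : |xseq k i| ≤ ∑ i, |xseq k i| :=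
      Finset.single_le_sum (f := fun i => |xseq k i|) (fun j _ => abs_nonneg _) (Finset.mem_univ i)
    nlinarith
  obtain ⟨z, -, φ, hφ, hz⟩ := (isCompact_closedBall (0 : Fin p → ℝ) _).tendsto_subseq hbd
  have hfix : softThreshold p lam (G z) = z := by
    have h1 : Tendsto (fun k => softThreshold p lam (G (xseq (φ k)))) atTop
        (nhds (softThreshold p lam (G z))) := (hTc.tendsto z).comp hz
    have h2 := (hstep.comp hφ.tendsto_atTop).add hz
    refine tendsto_nhds_unique h1 ?_
    rw [zero_add] at h2
    refine h2.congr fun k => ?_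
    simp only [Function.comp, sub_add_cancel, hrec']
  refine ⟨z, hmin z hfix, ?_⟩
  have hDanti : Antitone fun k => (xseq k - z) ⬝ᵥ (xseq k - z) := by
    apply antitone_nat_of_succ_le
    intro k
    have := hne (xseq k) z
    rwa [hfix, ← hrec'] at this
  have hDlim := tendsto_atTop_ciInf hDanti ⟨0, by rintro _ ⟨k, rfl⟩; exact hnn p _⟩
  have hsub : Tendsto (fun k => (xseq (φ k) - z) ⬝ᵥ (xseq (φ k) - z)) atTop (nhds 0) := by
    have hcd : Continuous fun x : Fin p → ℝ => (x - z) ⬝ᵥ (x - z) := by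
      simp only [dotProduct, Pi.sub_apply]
      fun_prop
    have := (hcd.tendsto z).comp hz
    simpa [Function.comp_def] using this
  rw [tendsto_nhds_unique (hDlim.comp hφ.tendsto_atTop) hsub] at hDlim
  have := (hconv _ hDlim).add_const z
  simpa using this
end
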